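/- arXiv:2505.23211 — 5 statements merged into one kernel-verified Lean document; each statement's English description precedes it below -/
import Mathlib

section
/- Let 0<q<∞, let Φ be an almost increasing function in the class 𝓛, and let ε > 0. Then there exists a constant C > 0, depending only on q, Φ and ε, such that for every positive Borel measure μ on 𝔻 and every measurable function f: 𝔻 → ℂ one has ∫_𝔻 |f(z)|^q Φ(1/(1−|z|)) dμ(z) ≤ C·( ∫_𝔻 (1−|z|)^{−ε} dμ(z) + ∫_𝔻 |f(z)|^q Φ(|f(z)|) dμ(z) ). -/
open MeasureTheory Complex Filter

noncomputable section

/-- The open unit disk in the complex plane. -/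
def unitDisk : Set ℂ := {z : ℂ | ‖z‖ < 1}

/-- The Lebesgue area measure on `ℂ`, normalized so that the unit disk has measure `1`. -/
def areaM : Measure ℂ := (ENNReal.ofReal Real.pi)⁻¹ • (volume : Measure ℂ)

/-- A function `ω : ℂ → ℝ` is radial if its value depends only on the modulus. -/
def IsRadial (ω : ℂ → ℝ) : Prop := ∀ z w : ℂ, ‖z‖ = ‖w‖ → ω z = ω w

/-- A weight: nonnegative on the unit disk and integrable there. -/
def IsWeight (ω : ℂ → ℝ) : Prop :=
  (∀ z ∈ unitDisk, 0 ≤ ω z) ∧ IntegrableOn ω unitDisk areaM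

/-- The tail integral `ω̂(r) = ∫_r^1 ω(s) ds` of a radial weight. -/
def omHat (ω : ℂ → ℝ) (r : ℝ) : ℝ := ∫ s in Set.Ioo r 1, ω (s : ℂ)

/-- `ω̂(r) > 0` for all `0 ≤ r < 1`. -/
def OmHatPos (ω : ℂ → ℝ) : Prop := ∀ r : ℝ, 0 ≤ r → r < 1 → 0 < omHat ω r

/-- The class `D̂` of upper doubling radial weights. -/
def Dhat (ω : ℂ → ℝ) : Prop :=
  ∃ C > (1 : ℝ), ∀ r : ℝ, 0 ≤ r → r < 1 → omHat ω r ≤ C * omHat ω ((1 + r) / 2)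

/-- The class `Ď` of lower doubling radial weights. -/
def Dcheck (ω : ℂ → ℝ) : Prop :=
  ∃ C > (1 : ℝ), ∃ K > (1 : ℝ), ∀ r : ℝ, 0 ≤ r → r < 1 →
    omHat ω r ≥ C * omHat ω (1 - (1 - r) / K)

/-- The class `D = D̂ ∩ Ď`. -/
def DoublingD (ω : ℂ → ℝ) : Prop := Dhat ω ∧ Dcheck ω

/-- Almost increasing on `[0, ∞)`. -/
def AlmostIncreasing (Ψ : ℝ → ℝ) : Prop :=
  ∃ C > (0 : ℝ), ∀ x y : ℝ, 0 ≤ x → x ≤ y → Ψ x ≤ C * Ψ y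

/-- Almost decreasing on `[0, ∞)`. -/
def AlmostDecreasing (Ψ : ℝ → ℝ) : Prop :=
  ∃ C > (0 : ℝ), ∀ x y : ℝ, 0 ≤ x → x ≤ y → Ψ y ≤ C * Ψ x

/-- The class `𝓛`: positive, almost monotone functions with `Ψ(x) ≍ Ψ(x²)`. -/
def InClassL (Ψ : ℝ → ℝ) : Prop :=
  (∀ x : ℝ, 0 ≤ x → 0 < Ψ x) ∧
  (AlmostIncreasing Ψ ∨ AlmostDecreasing Ψ) ∧
  ∃ C : ℝ, 1 ≤ C ∧ ∀ x : ℝ, 0 ≤ x → C⁻¹ * Ψ (x ^ 2) ≤ Ψ x ∧ Ψ x ≤ C * Ψ (x ^ 2)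

/-- The pseudohyperbolic distance. -/
def pseudoDist (a z : ℂ) : ℝ := ‖(a - z) / (1 - (starRingEnd ℂ) a * z)‖

/-- The pseudohyperbolic disk `Δ(a, r)`. -/
def pseudoDisk (a : ℂ) (r : ℝ) : Set ℂ := {z ∈ unitDisk | pseudoDist a z < r}

/-- The Carleson square `S(a)`. -/
def carlesonSq (a : ℂ) : Set ℂ :=
  if a = 0 then unitDisk else
    {z ∈ unitDisk | ‖a‖ ≤ ‖z‖ ∧
      |Complex.arg (a * Complex.exp (-((Complex.arg z : ℂ)) * Complex.I))| ≤ (1 - ‖a‖) / 2}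

/-- `ω(E) = ∫_E ω dA`. -/
def wInt (ω : ℂ → ℝ) (E : Set ℂ) : ℝ := ∫ z in E, ω z ∂areaM

/-- `μ` is a `(q,Φ)`-Carleson measure for `A^p_{ω,Ψ}`. -/
def IsCarleson (q : ℝ) (Φ : ℝ → ℝ) (p : ℝ) (Ψ : ℝ → ℝ) (ω : ℂ → ℝ) (μ : Measure ℂ) : Prop :=
  ∀ M > (0 : ℝ), ∃ C > (0 : ℝ), ∀ f : ℂ → ℂ, AnalyticOnNhd ℂ f unitDisk →
    (∫⁻ z in unitDisk, ENNReal.ofReal (‖f z‖ ^ p * Ψ ‖f z‖) ∂areaM) ≤ ENNReal.ofReal M →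
    (∫⁻ z in unitDisk, ENNReal.ofReal (‖f z‖ ^ q * Φ ‖f z‖) ∂μ) ≤ ENNReal.ofReal C

/-- The integrand `Υ^{μ,ω}_{Φ,Ψ,r}(z)^{p/(p-q)} · ω̂(z)/(1-|z|)`. -/
def UpsilonInt (μ : Measure ℂ) (ω : ℂ → ℝ) (Φ Ψ : ℝ → ℝ) (p q r : ℝ) (z : ℂ) : ℝ :=
  ((μ (pseudoDisk z r)).toReal * Φ (1 / (1 - ‖z‖)) /
      (wInt ω (carlesonSq z) * Ψ (1 / (1 - ‖z‖)) ^ (q / p))) ^ (p / (p - q)) *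
    (omHat ω ‖z‖ / (1 - ‖z‖))

/-- The integrand for the differentiation operator, with the extra factor `(1-|z|)^{nq}`. -/
def UpsilonIntN (n : ℕ) (μ : Measure ℂ) (ω : ℂ → ℝ) (Φ Ψ : ℝ → ℝ) (p q r : ℝ) (z : ℂ) : ℝ :=
  ((μ (pseudoDisk z r)).toReal * Φ (1 / (1 - ‖z‖)) /
      (wInt ω (carlesonSq z) * Ψ (1 / (1 - ‖z‖)) ^ (q / p) * (1 - ‖z‖) ^ ((n : ℝ) * q))) ^
      (p / (p - q)) *
    (omHat ω ‖z‖ / (1 - ‖z‖))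

end

/-!
Split according to whether `t = 1 / (1 - |z|)` is at most `|f z| ^ s`, where `s = 2q / ε`.

If it is, then `t ≤ |f z| ^ (2 ^ n)` for a fixed `n`, and almost monotonicity followed by `n` uses
of `Φ (x ^ 2) ≲ Φ x` gives `Φ t ≲ Φ |f z|`. If it is not, then `|f z| ^ q ≤ t ^ (ε / 2)`, while
`Φ` grows more slowly than any power, so `Φ t ≲ t ^ (ε / 2)` and the integrand is `≲ t ^ ε`.
-/

section SquareDoubling

variable {Φ : ℝ → ℝ}

/-- The bound `Φ (x ^ 2) ≲ Φ x` on `[1, ∞)`. It is one half of the comparability defining the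
class `𝓛`, and it makes an almost increasing function grow more slowly than every power. -/
def SquareDoubling (Φ : ℝ → ℝ) : Prop :=
  ∃ B > (0 : ℝ), ∀ x : ℝ, 1 ≤ x → Φ (x ^ 2) ≤ B * Φ x

theorem InClassL.squareDoubling (hΦ : InClassL Φ) : SquareDoubling Φ := by
  obtain ⟨-, -, C, hC, hcomp⟩ := hΦ
  have hC₀ : 0 < C := zero_lt_one.trans_le hC
  exact ⟨C, hC₀, fun x hx => (inv_mul_le_iff₀ hC₀).1 (hcomp x (zero_le_one.trans hx)).1⟩

theorem SquareDoubling.exists_apply_pow_two_pow_le (hsq : SquareDoubling Φ) :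
    ∃ B > (0 : ℝ), ∀ (n : ℕ) (x : ℝ), 1 ≤ x → Φ (x ^ 2 ^ n) ≤ B ^ n * Φ x := by
  obtain ⟨B, hB, hsq⟩ := hsq
  refine ⟨B, hB, fun n x hx => ?_⟩
  induction n with
  | zero => simp
  | succ n ih =>
    calc Φ (x ^ 2 ^ (n + 1)) = Φ ((x ^ 2 ^ n) ^ 2) := by rw [← pow_mul, ← pow_succ]
      _ ≤ B * Φ (x ^ 2 ^ n) := hsq _ (one_le_pow₀ hx)
      _ ≤ B * (B ^ n * Φ x) := by gcongr
      _ = B ^ (n + 1) * Φ x := by ring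

theorem AlmostIncreasing.exists_le_mul_of_le_pow_two_pow (hinc : AlmostIncreasing Φ)
    (hsq : SquareDoubling Φ) :
    ∃ A > (0 : ℝ), ∃ B > (0 : ℝ), ∀ (n : ℕ) (t x : ℝ), 0 ≤ t → 1 ≤ x → t ≤ x ^ 2 ^ n →
      Φ t ≤ A * B ^ n * Φ x := by
  obtain ⟨A, hA, hinc⟩ := hinc
  obtain ⟨B, hB, hiter⟩ := hsq.exists_apply_pow_two_pow_le
  refine ⟨A, hA, B, hB, fun n t x ht hx htx => ?_⟩
  calc Φ t ≤ A * Φ (x ^ 2 ^ n) := hinc t _ ht htx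
    _ ≤ A * (B ^ n * Φ x) := by gcongr; exact hiter n x hx
    _ = A * B ^ n * Φ x := by ring

theorem AlmostIncreasing.exists_le_mul_of_le_rpow (hinc : AlmostIncreasing Φ)
    (hsq : SquareDoubling Φ) (s : ℝ) :
    ∃ M > (0 : ℝ), ∀ t x : ℝ, 0 ≤ t → 1 ≤ x → t ≤ x ^ s → Φ t ≤ M * Φ x := by
  obtain ⟨A, hA, B, hB, hiter⟩ := hinc.exists_le_mul_of_le_pow_two_pow hsq
  obtain ⟨n, hn⟩ := pow_unbounded_of_one_lt s one_lt_two
  refine ⟨A * B ^ n, by positivity, fun t x ht hx htx => hiter n t x ht hx ?_⟩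
  calc t ≤ x ^ s := htx
    _ ≤ x ^ (2 ^ n : ℝ) := Real.rpow_le_rpow_of_exponent_le hx hn.le
    _ = x ^ 2 ^ n := by exact_mod_cast Real.rpow_natCast x (2 ^ n)

theorem AlmostIncreasing.exists_le_mul_rpow (hinc : AlmostIncreasing Φ)
    (hsq : SquareDoubling Φ) (hnonneg : ∀ x : ℝ, 0 ≤ x → 0 ≤ Φ x) {η : ℝ} (hη : 0 < η) :
    ∃ K : ℝ, 0 ≤ K ∧ ∀ t : ℝ, 1 ≤ t → Φ t ≤ K * t ^ η := by
  obtain ⟨A, hA, B, hB, hiter⟩ := hinc.exists_le_mul_of_le_pow_two_pow hsq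
  obtain ⟨b, hBb, hb⟩ : ∃ b : ℝ, B ≤ b ^ η ∧ 1 < b :=
    (((tendsto_rpow_atTop hη).eventually_ge_atTop B).and (eventually_gt_atTop 1)).exists
  have hb₀ : 0 ≤ b := zero_le_one.trans hb.le
  have hΦb : 0 ≤ Φ b := hnonneg b hb₀
  refine ⟨A * Φ b, by positivity, fun t ht => ?_⟩
  obtain ⟨n, hbt, htb⟩ := exists_nat_pow_near ht hb
  have htb' : t ≤ b ^ 2 ^ n := htb.le.trans (pow_le_pow_right₀ hb.le Nat.lt_two_pow_self)
  have hBt : B ^ n ≤ t ^ η :=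
    calc B ^ n ≤ (b ^ η) ^ n := by gcongr
      _ = (b ^ n) ^ η := Real.rpow_pow_comm hb₀ η n
      _ ≤ t ^ η := by gcongr
  calc Φ t ≤ A * B ^ n * Φ b := hiter n t b (zero_le_one.trans ht) hb.le htb'
    _ ≤ A * t ^ η * Φ b := by gcongr
    _ = A * Φ b * t ^ η := by ring

theorem AlmostIncreasing.exists_rpow_mul_le_add (hinc : AlmostIncreasing Φ)
    (hsq : SquareDoubling Φ) (hnonneg : ∀ x : ℝ, 0 ≤ x → 0 ≤ Φ x)
    {q ε : ℝ} (hq : 0 < q) (hε : 0 < ε) :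
    ∃ C > (0 : ℝ), ∀ t x : ℝ, 1 ≤ t → 0 ≤ x → x ^ q * Φ t ≤ C * (t ^ ε + x ^ q * Φ x) := by
  set s : ℝ := 2 * q / ε with hs
  have hs₀ : 0 < s := by positivity
  obtain ⟨M, hM, hlarge⟩ := hinc.exists_le_mul_of_le_rpow hsq s
  obtain ⟨K, hK, hgrowth⟩ := hinc.exists_le_mul_rpow hsq hnonneg (half_pos hε)
  refine ⟨M + K, by positivity, fun t x ht hx => ?_⟩
  have ht₀ : 0 < t := zero_lt_one.trans_le ht
  have htε : 0 ≤ t ^ ε := Real.rpow_nonneg ht₀.le ε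
  have hxΦ : 0 ≤ x ^ q * Φ x := mul_nonneg (Real.rpow_nonneg hx q) (hnonneg x hx)
  rcases le_or_gt t (x ^ s) with htx | hxt
  · have hx₁ : 1 ≤ x := by
      by_contra! hx₁
      exact (ht.trans htx).not_gt (Real.rpow_lt_one hx hx₁ hs₀)
    calc x ^ q * Φ t ≤ x ^ q * (M * Φ x) := by gcongr; exact hlarge t x ht₀.le hx₁ htx
      _ = M * (0 + x ^ q * Φ x) := by ring
      _ ≤ (M + K) * (t ^ ε + x ^ q * Φ x) := by gcongr; linarith
  · have hxq : x ^ q ≤ t ^ (ε / 2) :=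
      calc x ^ q = (x ^ s) ^ (ε / 2) := by
            rw [← Real.rpow_mul hx, hs]
            congr 1
            field_simp
        _ ≤ t ^ (ε / 2) := by gcongr
    calc x ^ q * Φ t ≤ t ^ (ε / 2) * (K * t ^ (ε / 2)) :=
          mul_le_mul hxq (hgrowth t ht) (hnonneg t ht₀.le) (by positivity)
      _ = K * (t ^ (ε / 2) * t ^ (ε / 2)) := by ring
      _ = K * (t ^ ε + 0) := by rw [← Real.rpow_add ht₀, add_halves, add_zero]
      _ ≤ (M + K) * (t ^ ε + x ^ q * Φ x) := by gcongr; linarith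

theorem almost_increasing_splitting_general (hinc : AlmostIncreasing Φ)
    (hsq : SquareDoubling Φ) (hnonneg : ∀ x : ℝ, 0 ≤ x → 0 ≤ Φ x)
    {q ε : ℝ} (hq : 0 < q) (hε : 0 < ε) :
    ∃ C > (0 : ℝ), ∀ {α : Type*} [MeasurableSpace α] (μ : Measure α) (d g : α → ℝ),
      AEMeasurable d μ → (∀ᵐ a ∂μ, d a ∈ Set.Ioc 0 1) → (∀ a, 0 ≤ g a) →
      ∫⁻ a, ENNReal.ofReal (g a ^ q * Φ (1 / d a)) ∂μ ≤
        ENNReal.ofReal C *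
          (∫⁻ a, ENNReal.ofReal (d a ^ (-ε)) ∂μ +
            ∫⁻ a, ENNReal.ofReal (g a ^ q * Φ (g a)) ∂μ) := by
  obtain ⟨C, hC, hpointwise⟩ := hinc.exists_rpow_mul_le_add hsq hnonneg hq hε
  refine ⟨C, hC, fun μ d g hd hd_mem hg => ?_⟩
  rw [← lintegral_add_left' (hd.pow_const _).ennreal_ofReal,
    ← lintegral_const_mul' _ _ ENNReal.ofReal_ne_top]
  refine lintegral_mono_ae (hd_mem.mono fun a ⟨hd₀, hd₁⟩ => ?_)
  have hgΦ : 0 ≤ g a ^ q * Φ (g a) :=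
    mul_nonneg (Real.rpow_nonneg (hg a) q) (hnonneg _ (hg a))
  rw [← ENNReal.ofReal_add (Real.rpow_nonneg hd₀.le _) hgΦ, ← ENNReal.ofReal_mul hC.le]
  refine ENNReal.ofReal_le_ofReal ?_
  have hbound := hpointwise (1 / d a) (g a) (one_le_one_div hd₀ hd₁) (hg a)
  rwa [one_div, Real.inv_rpow hd₀.le, ← Real.rpow_neg hd₀.le, ← one_div] at hbound

end SquareDoubling

theorem measurableSet_unitDisk : MeasurableSet unitDisk :=
  measurableSet_lt measurable_norm measurable_const

theorem almost_increasing_splitting (q : ℝ) (hq : 0 < q)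
    (Φ : ℝ → ℝ) (hΦ : InClassL Φ) (hΦinc : AlmostIncreasing Φ)
    (ε : ℝ) (hε : 0 < ε) :
    ∃ C > (0 : ℝ), ∀ μ : Measure ℂ, ∀ f : ℂ → ℂ, Measurable f →
      (∫⁻ z in unitDisk, ENNReal.ofReal (‖f z‖ ^ q * Φ (1 / (1 - ‖z‖))) ∂μ) ≤
        ENNReal.ofReal C *
          ((∫⁻ z in unitDisk, ENNReal.ofReal ((1 - ‖z‖) ^ (-ε)) ∂μ) +
            ∫⁻ z in unitDisk, ENNReal.ofReal (‖f z‖ ^ q * Φ ‖f z‖) ∂μ) := by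
  obtain ⟨C, hC, hsplit⟩ := almost_increasing_splitting_general hΦinc hΦ.squareDoubling
    (fun x hx => (hΦ.1 x hx).le) hq hε
  exact ⟨C, hC, fun μ f _ => hsplit (μ.restrict unitDisk) (1 - ‖·‖) (‖f ·‖) (by fun_prop)
    (ae_restrict_of_forall_mem measurableSet_unitDisk
      fun z hz => ⟨sub_pos.2 hz, sub_le_self 1 (norm_nonneg z)⟩) fun z => norm_nonneg (f z)⟩
end

section
/- Let ω be a radial weight on 𝔻. Then ω ∈ D̂ if and only if there exist constants C > 0 and β₀ > 0 such that for every β ≥ β₀ one has ω̂(r) ≤ C·((1−r)/(1−t))^β·ω̂(t) for all 0 ≤ r ≤ t < 1. -/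
open MeasureTheory Complex Filter

/-!
Put `x = 1 - r`, so that `G x = ω̂(1 - x)` is increasing and the doubling condition reads
`G x ≤ C * G (x / 2)`. For `y ≤ x` choose `n` with `2 ^ n ≤ x / y < 2 ^ (n + 1)`. Halving `n + 1`
times brings `x` below `y`, so `G x ≤ C ^ (n + 1) * G y`, and if `C ≤ 2 ^ β` then
`C ^ n ≤ (2 ^ n) ^ β ≤ (x / y) ^ β`. Thus every `β ≥ log₂ C` is admissible, with the doubling
constant `C` itself as the constant of the estimate. Conversely, the estimate at `t = (1 + r) / 2`
is the doubling condition, because then `(1 - r) / (1 - t) = 2`.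
-/

section Doubling

variable {G : ℝ → ℝ} {a C K : ℝ}

theorem le_pow_mul_div_pow_of_le_mul_div (hC : 0 ≤ C) (hK : 1 ≤ K)
    (hG : ∀ x ∈ Set.Ioc 0 a, G x ≤ C * G (x / K)) (n : ℕ) {x : ℝ} (hx : x ∈ Set.Ioc 0 a) :
    G x ≤ C ^ n * G (x / K ^ n) := by
  induction n with
  | zero => simp
  | succ n ih =>
    have hxn : x / K ^ n ∈ Set.Ioc 0 a :=
      ⟨div_pos hx.1 (by positivity), (div_le_self hx.1.le (one_le_pow₀ hK)).trans hx.2⟩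
    calc G x ≤ C ^ n * G (x / K ^ n) := ih
      _ ≤ C ^ n * (C * G (x / K ^ n / K)) := by gcongr; exact hG _ hxn
      _ = C ^ (n + 1) * G (x / K ^ (n + 1)) := by rw [div_div, ← pow_succ]; ring

theorem le_mul_rpow_mul_of_le_mul_div {β : ℝ} (hmono : MonotoneOn G (Set.Ioc 0 a))
    (hnonneg : ∀ x ∈ Set.Ioc 0 a, 0 ≤ G x) (hC : 0 ≤ C) (hK : 1 < K) (hβ : 0 ≤ β)
    (hCK : C ≤ K ^ β) (hG : ∀ x ∈ Set.Ioc 0 a, G x ≤ C * G (x / K))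
    {x y : ℝ} (hy : 0 < y) (hyx : y ≤ x) (hxa : x ≤ a) :
    G x ≤ C * (x / y) ^ β * G y := by
  have hx : 0 < x := hy.trans_le hyx
  have hK0 : 0 < K := one_pos.trans hK
  have hya : y ∈ Set.Ioc 0 a := ⟨hy, hyx.trans hxa⟩
  obtain ⟨n, hn, hn'⟩ := exists_nat_pow_near ((one_le_div hy).2 hyx) hK
  have hxy : x / K ^ (n + 1) ≤ y := ((div_lt_comm₀ hy (by positivity)).1 hn').le
  have hCn : C ^ n ≤ (x / y) ^ β :=
    calc C ^ n ≤ (K ^ β) ^ n := by gcongr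
      _ = (K ^ n) ^ β := Real.rpow_pow_comm hK0.le β n
      _ ≤ (x / y) ^ β := by gcongr
  calc G x ≤ C ^ (n + 1) * G (x / K ^ (n + 1)) :=
        le_pow_mul_div_pow_of_le_mul_div hC hK.le hG (n + 1) ⟨hx, hxa⟩
    _ ≤ C ^ (n + 1) * G y := by
        gcongr
        exact hmono ⟨by positivity, hxy.trans hya.2⟩ hya hxy
    _ = C * C ^ n * G y := by rw [pow_succ']
    _ ≤ C * (x / y) ^ β * G y := by
        have := hnonneg y hya
        gcongr

end Doubling

section Midpoint

variable {F : ℝ → ℝ}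

theorem le_mul_rpow_mul_of_le_mul_midpoint {C β : ℝ} (hanti : AntitoneOn F (Set.Ico 0 1))
    (hnonneg : ∀ r ∈ Set.Ico 0 1, 0 ≤ F r) (hC : 0 ≤ C) (hβ : 0 ≤ β) (hCβ : C ≤ 2 ^ β)
    (hF : ∀ r : ℝ, 0 ≤ r → r < 1 → F r ≤ C * F ((1 + r) / 2))
    {r t : ℝ} (hr : 0 ≤ r) (hrt : r ≤ t) (ht : t < 1) :
    F r ≤ C * ((1 - r) / (1 - t)) ^ β * F t := by
  have hmaps : ∀ x ∈ Set.Ioc (0 : ℝ) 1, 1 - x ∈ Set.Ico (0 : ℝ) 1 := fun x hx =>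
    ⟨sub_nonneg.2 hx.2, sub_lt_self 1 hx.1⟩
  have hmono : MonotoneOn (fun x => F (1 - x)) (Set.Ioc 0 1) := fun x hx y hy hxy =>
    hanti (hmaps y hy) (hmaps x hx) (by gcongr)
  have hdoubling : ∀ x ∈ Set.Ioc (0 : ℝ) 1, F (1 - x) ≤ C * F (1 - x / 2) := fun x hx => by
    convert hF (1 - x) (hmaps x hx).1 (hmaps x hx).2 using 3
    ring
  simpa only [sub_sub_cancel] using
    le_mul_rpow_mul_of_le_mul_div hmono (fun x hx => hnonneg _ (hmaps x hx)) hC one_lt_two hβ hCβ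
      hdoubling (sub_pos.2 ht) (sub_le_sub_left hrt 1) (sub_le_self 1 hr)

theorem Dhat_characterization_general (hanti : AntitoneOn F (Set.Ico 0 1))
    (hnonneg : ∀ r ∈ Set.Ico 0 1, 0 ≤ F r) :
    (∃ C > (1 : ℝ), ∀ r : ℝ, 0 ≤ r → r < 1 → F r ≤ C * F ((1 + r) / 2)) ↔
      ∃ C > (0 : ℝ), ∃ β₀ > (0 : ℝ), ∀ β : ℝ, β₀ ≤ β →
        ∀ r t : ℝ, 0 ≤ r → r ≤ t → t < 1 → F r ≤ C * ((1 - r) / (1 - t)) ^ β * F t := by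
  constructor
  · rintro ⟨C, hC, hF⟩
    have hC0 : 0 < C := one_pos.trans hC
    have hlog : 0 < Real.logb 2 C := Real.logb_pos one_lt_two hC
    exact ⟨C, hC0, Real.logb 2 C, hlog, fun β hβ _ _ hr hrt ht =>
      le_mul_rpow_mul_of_le_mul_midpoint hanti hnonneg hC0.le (hlog.le.trans hβ)
        ((Real.logb_le_iff_le_rpow one_lt_two hC0).1 hβ) hF hr hrt ht⟩
  · rintro ⟨C, -, β, -, hF⟩
    refine ⟨max 2 (C * 2 ^ β), lt_max_of_lt_left one_lt_two, fun r hr hr1 => ?_⟩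
    have hmid : (1 + r) / 2 ∈ Set.Ico (0 : ℝ) 1 := ⟨by linarith, by linarith⟩
    have hratio : (1 - r) / (1 - (1 + r) / 2) = 2 := by
      rw [div_eq_iff (sub_pos.2 hmid.2).ne']
      ring
    calc F r ≤ C * ((1 - r) / (1 - (1 + r) / 2)) ^ β * F ((1 + r) / 2) :=
          hF β le_rfl r _ hr (by linarith) hmid.2
      _ = C * 2 ^ β * F ((1 + r) / 2) := by rw [hratio]
      _ ≤ max 2 (C * 2 ^ β) * F ((1 + r) / 2) :=
          mul_le_mul_of_nonneg_right (le_max_right _ _) (hnonneg _ hmid)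

end Midpoint

theorem antitoneOn_setIntegral_Ioo {μ : Measure ℝ} {f : ℝ → ℝ} {a b : ℝ}
    (hf : IntegrableOn f (Set.Ioo a b) μ) (hnonneg : ∀ s ∈ Set.Ioo a b, 0 ≤ f s) :
    AntitoneOn (fun r => ∫ s in Set.Ioo r b, f s ∂μ) (Set.Ici a) := fun _ hr _ _ hrt =>
  setIntegral_mono_set (hf.mono_set (Set.Ioo_subset_Ioo_left hr))
    (ae_restrict_of_forall_mem measurableSet_Ioo fun s hs =>
      hnonneg s (Set.Ioo_subset_Ioo_left hr hs))
    (Set.Ioo_subset_Ioo_left hrt).eventuallyLE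

section TailIntegral

variable {ω : ℂ → ℝ}

theorem IsWeight.nonneg_of_mem_Ioo (hw : IsWeight ω) {s : ℝ} (hs : s ∈ Set.Ioo 0 1) :
    0 ≤ ω s :=
  hw.1 s (by simpa [unitDisk, abs_of_pos hs.1] using hs.2)

-- Integrability over the disk does not control `ω` near the origin (consider `ω z = 1 / ‖z‖`);
-- positivity of `omHat ω 0` excludes the junk value `0` of a divergent integral.
theorem OmHatPos.integrableOn_Ioo (hpos : OmHatPos ω) :
    IntegrableOn (fun s : ℝ => ω s) (Set.Ioo 0 1) :=
  .of_integral_ne_zero (hpos 0 le_rfl one_pos).ne'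

theorem IsWeight.antitoneOn_omHat (hw : IsWeight ω) (hpos : OmHatPos ω) :
    AntitoneOn (omHat ω) (Set.Ico 0 1) :=
  (antitoneOn_setIntegral_Ioo hpos.integrableOn_Ioo fun _ => hw.nonneg_of_mem_Ioo).mono
    Set.Ico_subset_Ici_self

end TailIntegral

theorem Dhat_characterization (ω : ℂ → ℝ)
    (hw : IsWeight ω) (hrad : IsRadial ω) (hpos : OmHatPos ω) :
    Dhat ω ↔ ∃ C > (0 : ℝ), ∃ β₀ > (0 : ℝ), ∀ β : ℝ, β₀ ≤ β →
      ∀ r t : ℝ, 0 ≤ r → r ≤ t → t < 1 →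
        omHat ω r ≤ C * ((1 - r) / (1 - t)) ^ β * omHat ω t :=
  Dhat_characterization_general (hw.antitoneOn_omHat hpos) fun r hr => (hpos r hr.1 hr.2).le
end

section
/- Let Ψ belong to the class 𝓛. Then there exist constants c₁ > 0, C₁ > 0 and c₂, C₂ ∈ ℝ, depending only on Ψ, such that c₁·(log(e+x))^{c₂} ≤ Ψ(x) ≤ C₁·(log(e+x))^{C₂} for all 0 ≤ x < ∞. -/
open MeasureTheory Complex Filter

/-!
Replacing `Ψ` by `1 / Ψ`, which stays in `𝓛`, we may assume `Ψ` almost increasing, so that it is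
bounded below by a positive constant. For the upper bound, iterating `Ψ (x ^ 2) ≤ C * Ψ x` from
`x = e` gives `Ψ (exp (2 ^ n)) ≤ C ^ n * Ψ e`. Choosing `n` with
`2 ^ (n - 1) ≤ log (e + x) < 2 ^ n`, almost monotonicity bounds `Ψ x` by a multiple of `C ^ n`,
and `C ^ (n - 1) = (2 ^ (n - 1)) ^ (log C / log 2) ≤ log (e + x) ^ (log C / log 2)`.
-/

theorem map_pow_pow_le_of_map_pow_le {R S : Type*} [MonoidWithZero R] [Preorder R]
    [ZeroLEOneClass R] [PosMulMono R] [MonoidWithZero S] [Preorder S] [PosMulMono S]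
    {f : R → S} {C : S} {k : ℕ} (hC : 0 ≤ C) (hf : ∀ x, 0 ≤ x → f (x ^ k) ≤ C * f x)
    {x : R} (hx : 0 ≤ x) (n : ℕ) : f (x ^ k ^ n) ≤ C ^ n * f x := by
  induction n with
  | zero => simp
  | succ n ih =>
    calc f (x ^ k ^ (n + 1)) = f ((x ^ k ^ n) ^ k) := by rw [pow_succ, pow_mul]
      _ ≤ C * f (x ^ k ^ n) := hf _ (pow_nonneg hx _)
      _ ≤ C * (C ^ n * f x) := mul_le_mul_of_nonneg_left ih hC
      _ = C ^ (n + 1) * f x := by rw [pow_succ', mul_assoc]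

theorem exists_le_pow_and_pow_le_mul_rpow_logb {b C y : ℝ} (hb : 1 < b) (hC : 1 ≤ C)
    (hy : 1 ≤ y) : ∃ n : ℕ, y ≤ b ^ n ∧ C ^ n ≤ C * y ^ Real.logb b C := by
  obtain ⟨n, hn_le, hn_lt⟩ := exists_nat_pow_near hy hb
  have hb₀ : 0 < b := one_pos.trans hb
  have hC₀ : 0 < C := one_pos.trans_le hC
  refine ⟨n + 1, hn_lt.le, ?_⟩
  calc C ^ (n + 1) = C * (b ^ Real.logb b C) ^ n := by
        rw [Real.rpow_logb hb₀ hb.ne' hC₀, pow_succ']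
    _ = C * (b ^ n) ^ Real.logb b C := by rw [Real.rpow_pow_comm hb₀.le]
    _ ≤ C * y ^ Real.logb b C := by
        gcongr
        exact Real.logb_nonneg hb hC

theorem one_le_log_exp_one_add {x : ℝ} (hx : 0 ≤ x) : 1 ≤ Real.log (Real.exp 1 + x) := by
  rw [Real.le_log_iff_exp_le (by positivity)]
  exact le_add_of_nonneg_right hx

theorem inv_le_mul_inv_iff_le_mul {K : Type*} [Field K] [LinearOrder K] [IsStrictOrderedRing K]
    {a b c : K} (ha : 0 < a) (hb : 0 < b) : b⁻¹ ≤ c * a⁻¹ ↔ a ≤ c * b := by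
  rw [← div_eq_mul_inv, le_div_iff₀ ha, inv_mul_le_iff₀ hb, mul_comm]

theorem AlmostIncreasing.inv {Ψ : ℝ → ℝ} (hmono : AlmostIncreasing Ψ)
    (hpos : ∀ x, 0 ≤ x → 0 < Ψ x) : AlmostDecreasing Ψ⁻¹ := by
  obtain ⟨D, hD, hΨ⟩ := hmono
  exact ⟨D, hD, fun x y hx hxy =>
    (inv_le_mul_inv_iff_le_mul (hpos x hx) (hpos y (hx.trans hxy))).2 (hΨ x y hx hxy)⟩

theorem AlmostDecreasing.inv {Ψ : ℝ → ℝ} (hmono : AlmostDecreasing Ψ)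
    (hpos : ∀ x, 0 ≤ x → 0 < Ψ x) : AlmostIncreasing Ψ⁻¹ := by
  obtain ⟨D, hD, hΨ⟩ := hmono
  exact ⟨D, hD, fun x y hx hxy =>
    (inv_le_mul_inv_iff_le_mul (hpos y (hx.trans hxy)) (hpos x hx)).2 (hΨ x y hx hxy)⟩

theorem InClassL.inv {Ψ : ℝ → ℝ} (hΨ : InClassL Ψ) : InClassL Ψ⁻¹ := by
  obtain ⟨hpos, hmono, C, hC, hsq⟩ := hΨ
  refine ⟨fun x hx => inv_pos.2 (hpos x hx),
    hmono.symm.imp (fun h => h.inv hpos) (fun h => h.inv hpos), C, hC, fun x hx => ?_⟩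
  have hx_pos : 0 < Ψ x := hpos x hx
  have hxsq_pos : 0 < Ψ (x ^ 2) := hpos _ (sq_nonneg x)
  obtain ⟨hlower, hupper⟩ := hsq x hx
  constructor
  · simpa only [Pi.inv_apply, mul_inv] using inv_anti₀ hx_pos hupper
  · simpa only [Pi.inv_apply, mul_inv, inv_inv] using inv_anti₀ (by positivity) hlower

theorem AlmostIncreasing.exists_pos_le {Ψ : ℝ → ℝ} (hmono : AlmostIncreasing Ψ) (h₀ : 0 < Ψ 0) :
    ∃ c > 0, ∀ x, 0 ≤ x → c ≤ Ψ x := by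
  obtain ⟨D, hD, hΨ⟩ := hmono
  exact ⟨Ψ 0 / D, div_pos h₀ hD, fun x hx => (div_le_iff₀' hD).2 (hΨ 0 x le_rfl hx)⟩

theorem AlmostIncreasing.exists_le_mul_log_rpow {Ψ : ℝ → ℝ} {C : ℝ} {k : ℕ}
    (hmono : AlmostIncreasing Ψ) (he : 0 < Ψ (Real.exp 1)) (hC : 1 ≤ C) (hk : 1 < k)
    (hpow : ∀ x, 0 ≤ x → Ψ (x ^ k) ≤ C * Ψ x) :
    ∃ A > 0, ∀ x, 0 ≤ x → Ψ x ≤ A * Real.log (Real.exp 1 + x) ^ Real.logb k C := by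
  obtain ⟨D, hD, hΨ⟩ := hmono
  refine ⟨D * C * Ψ (Real.exp 1), by positivity, fun x hx => ?_⟩
  obtain ⟨n, hLn, hCn⟩ := exists_le_pow_and_pow_le_mul_rpow_logb (Nat.one_lt_cast.2 hk) hC
    (one_le_log_exp_one_add hx)
  set L := Real.log (Real.exp 1 + x)
  have hxn : x ≤ Real.exp 1 ^ k ^ n :=
    calc x ≤ Real.exp 1 + x := le_add_of_nonneg_left (Real.exp_pos 1).le
      _ = Real.exp L := (Real.exp_log (by positivity)).symm
      _ ≤ Real.exp (k ^ n) := Real.exp_le_exp.2 hLn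
      _ = Real.exp 1 ^ k ^ n := by rw [Real.exp_one_pow, Nat.cast_pow]
  calc Ψ x ≤ D * Ψ (Real.exp 1 ^ k ^ n) := hΨ _ _ hx hxn
    _ ≤ D * (C ^ n * Ψ (Real.exp 1)) := by
        gcongr
        exact map_pow_pow_le_of_map_pow_le (by positivity) hpow (Real.exp_pos 1).le n
    _ ≤ D * (C * L ^ Real.logb k C * Ψ (Real.exp 1)) := by gcongr
    _ = D * C * Ψ (Real.exp 1) * L ^ Real.logb k C := by ring

/-- `Ψ` lies between two positive multiples of real powers of `log (e + x)` on `[0, ∞)`. Neither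
exponent is required to be positive, which makes the notion invariant under `Ψ ↦ Ψ⁻¹`. -/
def HasPolylogBounds (Ψ : ℝ → ℝ) : Prop :=
  ∃ c₁ > (0 : ℝ), ∃ C₁ > (0 : ℝ), ∃ c₂ C₂ : ℝ, ∀ x : ℝ, 0 ≤ x →
    c₁ * Real.log (Real.exp 1 + x) ^ c₂ ≤ Ψ x ∧
    Ψ x ≤ C₁ * Real.log (Real.exp 1 + x) ^ C₂

theorem HasPolylogBounds.inv {Ψ : ℝ → ℝ} (h : HasPolylogBounds Ψ) : HasPolylogBounds Ψ⁻¹ := by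
  obtain ⟨c₁, hc₁, C₁, hC₁, c₂, C₂, hbounds⟩ := h
  refine ⟨C₁⁻¹, inv_pos.2 hC₁, c₁⁻¹, inv_pos.2 hc₁, -C₂, -c₂, fun x hx => ?_⟩
  obtain ⟨hlower, hupper⟩ := hbounds x hx
  have hL : 0 < Real.log (Real.exp 1 + x) := one_pos.trans_le (one_le_log_exp_one_add hx)
  have hlower_pos : 0 < c₁ * Real.log (Real.exp 1 + x) ^ c₂ := by positivity
  rw [Real.rpow_neg hL.le, Real.rpow_neg hL.le, ← mul_inv, ← mul_inv]
  exact ⟨inv_anti₀ (hlower_pos.trans_le hlower) hupper, inv_anti₀ hlower_pos hlower⟩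

theorem InClassL.hasPolylogBounds_of_almostIncreasing {Ψ : ℝ → ℝ} (hΨ : InClassL Ψ)
    (hmono : AlmostIncreasing Ψ) : HasPolylogBounds Ψ := by
  obtain ⟨hpos, -, C, hC, hsq⟩ := hΨ
  obtain ⟨c, hc, hlower⟩ := hmono.exists_pos_le (hpos 0 le_rfl)
  obtain ⟨A, hA, hupper⟩ := hmono.exists_le_mul_log_rpow (hpos _ (Real.exp_pos 1).le) hC
    one_lt_two fun x hx => (inv_mul_le_iff₀ (one_pos.trans_le hC)).1 (hsq x hx).1
  exact ⟨c, hc, A, hA, 0, _, fun x hx => ⟨by simpa using hlower x hx, hupper x hx⟩⟩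

theorem classL_log_growth (Ψ : ℝ → ℝ) (hΨ : InClassL Ψ) :
    ∃ c₁ > (0 : ℝ), ∃ C₁ > (0 : ℝ), ∃ c₂ C₂ : ℝ, ∀ x : ℝ, 0 ≤ x →
      c₁ * Real.log (Real.exp 1 + x) ^ c₂ ≤ Ψ x ∧
      Ψ x ≤ C₁ * Real.log (Real.exp 1 + x) ^ C₂ := by
  change HasPolylogBounds Ψ
  rcases hΨ.2.1 with hmono | hmono
  · exact hΨ.hasPolylogBounds_of_almostIncreasing hmono
  · have hbounds : HasPolylogBounds Ψ⁻¹ :=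
      hΨ.inv.hasPolylogBounds_of_almostIncreasing (hmono.inv hΨ.1)
    simpa only [inv_inv] using hbounds.inv
end

section
/- Let Ψ belong to the class 𝓛 and let 0 < α < ∞. Then there exists a constant C ≥ 1, depending only on Ψ and α, such that C⁻¹·Ψ(x^α) ≤ Ψ(x) ≤ C·Ψ(x^α) for all 0 ≤ x < ∞. -/
open MeasureTheory Complex Filter

/-! The exponents `a > 0` for which `Ψ(x ^ a) ≍ Ψ(x)` form a multiplicative group, since
`x ↦ x ^ a` permutes `[0, ∞)`. If `Ψ` is almost monotone this group is order-convex, because `x ^ b`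
lies between `x ^ a` and `x ^ c` whenever `a ≤ b ≤ c`. A convex subgroup of the Archimedean group
`(0, ∞)` that contains `2` is everything. -/

open Set Asymptotics

theorem eq_top_of_ordConnected_of_one_lt_mem {G : Type*} [CommGroup G] [LinearOrder G]
    [IsOrderedMonoid G] [MulArchimedean G] {H : Subgroup G} (hH : OrdConnected (H : Set G))
    {a : G} (ha : a ∈ H) (one_lt_a : 1 < a) : H = ⊤ := by
  refine (Subgroup.eq_top_iff' H).2 fun g => ?_
  obtain ⟨n, ⟨hle, hlt⟩, -⟩ := existsUnique_zpow_near_of_one_lt one_lt_a g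
  exact hH.out (zpow_mem ha n) (zpow_mem ha (n + 1)) ⟨hle, hlt.le⟩

instance mulArchimedean_pos {K : Type*} [Field K] [LinearOrder K] [IsStrictOrderedRing K]
    [Archimedean K] : MulArchimedean {a : K // 0 < a} where
  arch x _ hy :=
    let ⟨n, hn⟩ := pow_unbounded_of_one_lt (x : K) hy
    ⟨n, hn.le⟩

theorem isBigO_principal_iff_of_nonneg {X : Type*} {s : Set X} {f g : X → ℝ}
    (hf : ∀ x ∈ s, 0 ≤ f x) (hg : ∀ x ∈ s, 0 ≤ g x) :
    f =O[𝓟 s] g ↔ ∃ C, ∀ x ∈ s, f x ≤ C * g x := by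
  refine isBigO_principal.trans (exists_congr fun C => forall₂_congr fun x hx => ?_)
  rw [Real.norm_of_nonneg (hf x hx), Real.norm_of_nonneg (hg x hx)]

theorem isTheta_principal_iff_of_nonneg {X : Type*} {s : Set X} {f g : X → ℝ}
    (hf : ∀ x ∈ s, 0 ≤ f x) (hg : ∀ x ∈ s, 0 ≤ g x) :
    f =Θ[𝓟 s] g ↔ ∃ C : ℝ, 1 ≤ C ∧ ∀ x ∈ s, C⁻¹ * g x ≤ f x ∧ f x ≤ C * g x := by
  rw [IsTheta, isBigO_principal_iff_of_nonneg hf hg, isBigO_principal_iff_of_nonneg hg hf]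
  constructor
  · rintro ⟨⟨A, hA⟩, B, hB⟩
    have one_le_C : 1 ≤ max 1 (max A B) := le_max_left _ _
    have A_le_C : A ≤ max 1 (max A B) := (le_max_left _ _).trans (le_max_right _ _)
    have B_le_C : B ≤ max 1 (max A B) := (le_max_right _ _).trans (le_max_right _ _)
    refine ⟨max 1 (max A B), one_le_C, fun x hx => ⟨?_, ?_⟩⟩
    · exact (inv_mul_le_iff₀ (zero_lt_one.trans_le one_le_C)).2
        ((hB x hx).trans (mul_le_mul_of_nonneg_right B_le_C (hf x hx)))
    · exact (hA x hx).trans (mul_le_mul_of_nonneg_right A_le_C (hg x hx))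
  · rintro ⟨C, one_le_C, hC⟩
    have C_pos : 0 < C := zero_lt_one.trans_le one_le_C
    exact ⟨⟨C, fun x hx => (hC x hx).2⟩, C, fun x hx => (inv_mul_le_iff₀ C_pos).1 (hC x hx).1⟩

section AlmostMonotone

variable {X : Type*} {l : Filter X} {Ψ : ℝ → ℝ} {f g h : X → ℝ}

theorem AlmostIncreasing.isBigO_comp (hΨ : AlmostIncreasing Ψ) (hΨ₀ : ∀ x, 0 ≤ x → 0 ≤ Ψ x)
    (hf : 0 ≤ᶠ[l] f) (hfg : f ≤ᶠ[l] g) : (Ψ ∘ f) =O[l] (Ψ ∘ g) := by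
  obtain ⟨C, -, hC⟩ := hΨ
  refine .of_bound C ?_
  filter_upwards [hf, hfg] with x hfx hfgx
  simpa only [Function.comp_apply, Real.norm_of_nonneg (hΨ₀ _ hfx),
    Real.norm_of_nonneg (hΨ₀ _ (hfx.trans hfgx))] using hC _ _ hfx hfgx

theorem AlmostDecreasing.isBigO_comp (hΨ : AlmostDecreasing Ψ) (hΨ₀ : ∀ x, 0 ≤ x → 0 ≤ Ψ x)
    (hf : 0 ≤ᶠ[l] f) (hfg : f ≤ᶠ[l] g) : (Ψ ∘ g) =O[l] (Ψ ∘ f) := by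
  obtain ⟨C, -, hC⟩ := hΨ
  refine .of_bound C ?_
  filter_upwards [hf, hfg] with x hfx hfgx
  simpa only [Function.comp_apply, Real.norm_of_nonneg (hΨ₀ _ hfx),
    Real.norm_of_nonneg (hΨ₀ _ (hfx.trans hfgx))] using hC _ _ hfx hfgx

theorem isTheta_comp_of_le_of_le {F : Type*} [Norm F] {k : X → F}
    (hΨ : AlmostIncreasing Ψ ∨ AlmostDecreasing Ψ) (hΨ₀ : ∀ x, 0 ≤ x → 0 ≤ Ψ x)
    (hf : 0 ≤ᶠ[l] f) (hfg : f ≤ᶠ[l] g) (hgh : g ≤ᶠ[l] h)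
    (hfk : (Ψ ∘ f) =Θ[l] k) (hhk : (Ψ ∘ h) =Θ[l] k) : (Ψ ∘ g) =Θ[l] k := by
  have hg : 0 ≤ᶠ[l] g := hf.trans hfg
  rcases hΨ with hΨ | hΨ
  · exact ⟨(hΨ.isBigO_comp hΨ₀ hg hgh).trans hhk.1, hfk.2.trans (hΨ.isBigO_comp hΨ₀ hf hfg)⟩
  · exact ⟨(hΨ.isBigO_comp hΨ₀ hf hfg).trans hfk.1, hhk.2.trans (hΨ.isBigO_comp hΨ₀ hg hgh)⟩

end AlmostMonotone

theorem rpow_eventually_nonneg (a : ℝ) : 0 ≤ᶠ[𝓟 (Ici 0)] fun x : ℝ => x ^ a :=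
  eventually_principal.2 fun _ hx => Real.rpow_nonneg hx a

theorem isTheta_comp_rpow {E F : Type*} [Norm E] [Norm F] {f : ℝ → E} {g : ℝ → F}
    (h : f =Θ[𝓟 (Ici 0)] g) (a : ℝ) :
    (fun x : ℝ => f (x ^ a)) =Θ[𝓟 (Ici 0)] fun x => g (x ^ a) :=
  have maps_nonneg : Tendsto (fun x : ℝ => x ^ a) (𝓟 (Ici 0)) (𝓟 (Ici 0)) :=
    tendsto_principal.2 (rpow_eventually_nonneg a)
  ⟨h.1.comp_tendsto maps_nonneg, h.2.comp_tendsto maps_nonneg⟩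

/-- The multiplicative group of exponents `a > 0` such that `Ψ(x ^ a) ≍ Ψ(x)` on `[0, ∞)`.
The uniform comparison on `[0, ∞)` is encoded as `=Θ` along the principal filter of `[0, ∞)`. -/
def comparableExponents {E : Type*} [SeminormedAddCommGroup E] (Ψ : ℝ → E) :
    Subgroup {a : ℝ // 0 < a} where
  carrier := {a | (fun x : ℝ => Ψ (x ^ (a : ℝ))) =Θ[𝓟 (Ici 0)] Ψ}
  one_mem' := by
    simpa only [mem_ofPred_eq, Positive.val_one, Real.rpow_one] using isTheta_refl Ψ _
  mul_mem' {a b} ha hb := by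
    have hab : (fun x : ℝ => Ψ (x ^ (a * b : ℝ))) =ᶠ[𝓟 (Ici 0)]
        fun x => Ψ ((x ^ (a : ℝ)) ^ (b : ℝ)) :=
      eventually_principal.2 fun x hx => congrArg Ψ (Real.rpow_mul hx a b)
    exact hab.trans_isTheta ((isTheta_comp_rpow hb a).trans ha)
  inv_mem' {a} ha := by
    have ha_inv : (fun x : ℝ => Ψ ((x ^ (a⁻¹ : ℝ)) ^ (a : ℝ))) =ᶠ[𝓟 (Ici 0)] Ψ :=
      eventually_principal.2 fun x hx => congrArg Ψ (Real.rpow_inv_rpow hx a.2.ne')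
    exact (isTheta_comp_rpow ha (a⁻¹ : ℝ)).symm.trans_eventuallyEq ha_inv

theorem mem_comparableExponents {E : Type*} [SeminormedAddCommGroup E] {Ψ : ℝ → E}
    {a : {a : ℝ // 0 < a}} :
    a ∈ comparableExponents Ψ ↔ (fun x : ℝ => Ψ (x ^ (a : ℝ))) =Θ[𝓟 (Ici 0)] Ψ :=
  Iff.rfl

theorem ordConnected_comparableExponents {Ψ : ℝ → ℝ}
    (hΨ : AlmostIncreasing Ψ ∨ AlmostDecreasing Ψ) (hΨ₀ : ∀ x, 0 ≤ x → 0 ≤ Ψ x) :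
    OrdConnected (comparableExponents Ψ : Set {a : ℝ // 0 < a}) := by
  refine ⟨fun a ha c hc b ⟨hab, hbc⟩ => ?_⟩
  rw [SetLike.mem_coe, mem_comparableExponents] at ha hc ⊢
  have Icc_le : 𝓟 (Icc (0 : ℝ) 1) ≤ 𝓟 (Ici 0) := principal_mono.2 Icc_subset_Ici_self
  have Ici_le : 𝓟 (Ici (1 : ℝ)) ≤ 𝓟 (Ici 0) := principal_mono.2 (Ici_subset_Ici.2 zero_le_one)
  have antitone_unit {d e : {a : ℝ // 0 < a}} (hde : d ≤ e) :
      (fun x : ℝ => x ^ (e : ℝ)) ≤ᶠ[𝓟 (Icc 0 1)] fun x => x ^ (d : ℝ) :=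
    eventually_principal.2 fun x hx =>
      Real.rpow_le_rpow_of_exponent_ge_of_imp hx.1 hx.2 hde fun _ he => absurd he e.2.ne'
  have monotone_one {d e : {a : ℝ // 0 < a}} (hde : d ≤ e) :
      (fun x : ℝ => x ^ (d : ℝ)) ≤ᶠ[𝓟 (Ici 1)] fun x => x ^ (e : ℝ) :=
    eventually_principal.2 fun x hx => Real.rpow_le_rpow_of_exponent_le hx hde
  rw [← Icc_union_Ici_eq_Ici (zero_le_one' ℝ), ← sup_principal]
  exact .sup
    (isTheta_comp_of_le_of_le hΨ hΨ₀ ((rpow_eventually_nonneg c).filter_mono Icc_le)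
      (antitone_unit hbc) (antitone_unit hab) (hc.mono Icc_le) (ha.mono Icc_le))
    (isTheta_comp_of_le_of_le hΨ hΨ₀ ((rpow_eventually_nonneg a).filter_mono Ici_le)
      (monotone_one hab) (monotone_one hbc) (ha.mono Ici_le) (hc.mono Ici_le))

theorem InClassL.two_mem_comparableExponents {Ψ : ℝ → ℝ} (hΨ : InClassL Ψ) :
    ⟨2, two_pos⟩ ∈ comparableExponents Ψ := by
  obtain ⟨hpos, -, hsq⟩ := hΨ
  have hΘ : Ψ =Θ[𝓟 (Ici 0)] fun x => Ψ (x ^ 2) :=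
    (isTheta_principal_iff_of_nonneg (fun x hx => (hpos x hx).le)
      fun x _ => (hpos _ (sq_nonneg x)).le).2 hsq
  simpa only [mem_comparableExponents, Real.rpow_two] using hΘ.symm

theorem InClassL.comparableExponents_eq_top {Ψ : ℝ → ℝ} (hΨ : InClassL Ψ) :
    comparableExponents Ψ = ⊤ :=
  eq_top_of_ordConnected_of_one_lt_mem
    (ordConnected_comparableExponents hΨ.2.1 fun x hx => (hΨ.1 x hx).le)
    hΨ.two_mem_comparableExponents (Subtype.mk_lt_mk.2 one_lt_two)

theorem classL_rpow_comparable (Ψ : ℝ → ℝ) (hΨ : InClassL Ψ) (α : ℝ) (hα : 0 < α) :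
    ∃ C : ℝ, 1 ≤ C ∧ ∀ x : ℝ, 0 ≤ x →
      C⁻¹ * Ψ (x ^ α) ≤ Ψ x ∧ Ψ x ≤ C * Ψ (x ^ α) := by
  have hmem : (⟨α, hα⟩ : {a : ℝ // 0 < a}) ∈ comparableExponents Ψ :=
    hΨ.comparableExponents_eq_top ▸ Subgroup.mem_top _
  exact (isTheta_principal_iff_of_nonneg (fun x hx => (hΨ.1 x hx).le)
    fun x hx => (hΨ.1 _ (Real.rpow_nonneg hx α)).le).1 (mem_comparableExponents.1 hmem).symm
end

section
/- Let ω be a radial weight in the class D and let α > 0, and define ω_{[α]}(z) = (1−|z|)^α·ω(z). Then ω_{[α]} is a radial weight in the class D, and moreover there exists a constant C ≥ 1 such that C⁻¹·ω̂(z)·(1−|z|)^α ≤ ω̂_{[α]}(z) ≤ C·ω̂(z)·(1−|z|)^α for all z ∈ 𝔻, where ω̂_{[α]}(z) = ∫_{|z|}^1 (1−s)^α ω(s) ds. -/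
open MeasureTheory Complex Filter

/-!
Let `σ(z) = φ(|z|) ω(z)` with `φ` nonnegative, decreasing and satisfying `φ(r) ≲ φ((1 + r) / 2)`;
the theorem is the case `φ(r) = (1 - r) ^ α`. Since `φ` decreases, `σ̂(r) ≤ φ(r) ω̂(r)`, and
splitting the tail at `ρ ≥ r` gives `φ(ρ) (ω̂(r) - ω̂(ρ)) + σ̂(ρ) ≤ σ̂(r)`. For
`ρ = 1 - (1 - r) / K` the condition `Ď` says that `ω̂(r) - ω̂(ρ)` is at least `(C - 1) ω̂(ρ)`, and
hence at least a fixed proportion of `ω̂(r)`. The first bound gives `Ď` for `σ` with the same `C`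
and `K`; the second gives `φ(r) ω̂(r) ≲ σ̂(r)`, because `φ(r) ≲ φ(ρ)`. Finally `D̂` passes from
`ω̂` to `φ ω̂ ≍ σ̂`.
-/

section

open Set

section SetIntegral

variable {X : Type*} [MeasurableSpace X] {μ : Measure X} {s : Set X} {φ f : X → ℝ} {c : ℝ}

theorem setIntegral_mul_le_mul_setIntegral (hs : MeasurableSet s) (hφ : ∀ x ∈ s, φ x ≤ c)
    (hf₀ : ∀ x ∈ s, 0 ≤ f x) (hf : IntegrableOn f s μ)
    (hφf : IntegrableOn (fun x ↦ φ x * f x) s μ) :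
    ∫ x in s, φ x * f x ∂μ ≤ c * ∫ x in s, f x ∂μ := by
  rw [← integral_const_mul]
  exact setIntegral_mono_on hφf (hf.const_mul c) hs fun x hx ↦
    mul_le_mul_of_nonneg_right (hφ x hx) (hf₀ x hx)

theorem mul_setIntegral_le_setIntegral_mul (hs : MeasurableSet s) (hφ : ∀ x ∈ s, c ≤ φ x)
    (hf₀ : ∀ x ∈ s, 0 ≤ f x) (hf : IntegrableOn f s μ)
    (hφf : IntegrableOn (fun x ↦ φ x * f x) s μ) :
    c * ∫ x in s, f x ∂μ ≤ ∫ x in s, φ x * f x ∂μ := by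
  rw [← integral_const_mul]
  exact setIntegral_mono_on (hf.const_mul c) hφf hs fun x hx ↦
    mul_le_mul_of_nonneg_right (hφ x hx) (hf₀ x hx)

end SetIntegral

theorem setIntegral_Ioc_add_setIntegral_Ioo {X E : Type*} [LinearOrder X] [TopologicalSpace X]
    [OrderClosedTopology X] [MeasurableSpace X] [OpensMeasurableSpace X] [NormedAddCommGroup E]
    [NormedSpace ℝ E] {μ : Measure X} {f : X → E} {a b c : X} (hab : a ≤ b) (hbc : b < c)
    (hf : IntegrableOn f (Ioo a c) μ) :
    ∫ x in Ioc a b, f x ∂μ + ∫ x in Ioo b c, f x ∂μ = ∫ x in Ioo a c, f x ∂μ := by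
  have hdisj : Disjoint (Ioc a b) (Ioo b c) :=
    disjoint_left.2 fun _ hx hx' ↦ hx.2.not_gt hx'.1
  rw [← Ioc_union_Ioo_eq_Ioo hab hbc] at hf ⊢
  exact (setIntegral_union hdisj measurableSet_Ioo hf.left_of_union hf.right_of_union).symm

theorem one_sub_div_mem_Ico {𝕜 : Type*} [Field 𝕜] [LinearOrder 𝕜] [IsStrictOrderedRing 𝕜]
    {K r : 𝕜} (hK : 1 ≤ K) (hr : r < 1) :
    1 - (1 - r) / K ∈ Ico r 1 := by
  have hpos : 0 < (1 - r) / K := div_pos (sub_pos.2 hr) (by linarith)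
  have hle : (1 - r) / K ≤ 1 - r := div_le_self (sub_pos.2 hr).le hK
  constructor <;> linarith

/-- A nonnegative decreasing function on `[0, 1)`, by which a radial weight can be multiplied
without losing integrability. Values outside `[0, 1)` are irrelevant. -/
structure IsDecreasingFactor (φ : ℝ → ℝ) : Prop where
  nonneg : ∀ r ∈ Ico (0 : ℝ) 1, 0 ≤ φ r
  antitoneOn : AntitoneOn φ (Ico 0 1)

/-- The pointwise doubling condition `φ(r) ≲ φ((1 + r) / 2)` on `[0, 1)`: the analogue for `φ` of
the condition defining `D̂`. The constant is normalized to be at least `1`. -/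
def IsDoublingFactor (φ : ℝ → ℝ) : Prop :=
  ∃ M ≥ (1 : ℝ), ∀ r ∈ Ico (0 : ℝ) 1, φ r ≤ M * φ ((1 + r) / 2)

/-- The weight `φ(|z|) ω(z)`; for `φ(r) = (1 - r) ^ α` it is the weight `ω_{[α]}`. -/
noncomputable def radialMul (φ : ℝ → ℝ) (ω : ℂ → ℝ) : ℂ → ℝ := fun z ↦ φ ‖z‖ * ω z

variable {φ : ℝ → ℝ} {ω : ℂ → ℝ} {r ρ : ℝ}

theorem isDecreasingFactor_one_sub_rpow {α : ℝ} (hα : 0 ≤ α) :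
    IsDecreasingFactor fun r ↦ (1 - r) ^ α where
  nonneg _ hr := Real.rpow_nonneg (sub_nonneg.2 hr.2.le) α
  antitoneOn _ _ _ hs hrs :=
    Real.rpow_le_rpow (sub_nonneg.2 hs.2.le) (sub_le_sub_left hrs 1) hα

theorem isDoublingFactor_one_sub_rpow {α : ℝ} (hα : 0 ≤ α) :
    IsDoublingFactor fun r ↦ (1 - r) ^ α := by
  refine ⟨2 ^ α, Real.one_le_rpow one_le_two hα, fun r hr ↦ le_of_eq ?_⟩
  have hhalf : 0 ≤ 1 - (1 + r) / 2 := by linarith [hr.2]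
  rw [← Real.mul_rpow zero_le_two hhalf]
  ring_nf

namespace IsDecreasingFactor

theorem exists_le_mul_one_sub_div (hφ : IsDecreasingFactor φ) (hd : IsDoublingFactor φ)
    {K : ℝ} (hK : 1 ≤ K) :
    ∃ M ≥ (1 : ℝ), ∀ r ∈ Ico (0 : ℝ) 1, φ r ≤ M * φ (1 - (1 - r) / K) := by
  obtain ⟨M, hM, hφM⟩ := hd
  have hiter : ∀ n : ℕ, ∀ r ∈ Ico (0 : ℝ) 1, φ r ≤ M ^ n * φ (1 - (1 - r) / 2 ^ n) := by
    intro n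
    induction n with
    | zero => simp
    | succ n ih =>
      intro r hr
      have hmid : (1 + r) / 2 ∈ Ico (0 : ℝ) 1 := by constructor <;> linarith [hr.1, hr.2]
      calc φ r ≤ M * φ ((1 + r) / 2) := hφM r hr
        _ ≤ M * (M ^ n * φ (1 - (1 - (1 + r) / 2) / 2 ^ n)) := by
          gcongr
          exact ih _ hmid
        _ = M ^ (n + 1) * φ (1 - (1 - r) / 2 ^ (n + 1)) := by ring_nf
  obtain ⟨n, hn⟩ := pow_unbounded_of_one_lt K one_lt_two
  refine ⟨M ^ n, one_le_pow₀ hM, fun r hr ↦ (hiter n r hr).trans ?_⟩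
  have hK_mem := one_sub_div_mem_Ico hK hr.2
  have hn_mem := one_sub_div_mem_Ico (hK.trans hn.le) hr.2
  have hsub : 0 ≤ 1 - r := sub_nonneg.2 hr.2.le
  gcongr
  exact hφ.antitoneOn (Ico_subset_Ico_left hr.1 hK_mem) (Ico_subset_Ico_left hr.1 hn_mem)
    (by gcongr)

theorem integrableOn_comp_mul {X : Type*} [MeasurableSpace X] {μ : Measure X} {s : Set X}
    {g f : X → ℝ} (hφ : IsDecreasingFactor φ) (hg : Measurable g) (hs : MeasurableSet s)
    (hgs : MapsTo g s (Ico 0 1)) (hf : IntegrableOn f s μ) :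
    IntegrableOn (fun x ↦ φ (g x) * f x) s μ := by
  have hmeas : AEMeasurable (fun x ↦ φ (g x)) (μ.restrict s) := by
    have hφmeas : AEMeasurable φ ((μ.map g).restrict (Ico 0 1)) :=
      aemeasurable_restrict_of_antitoneOn measurableSet_Ico hφ.antitoneOn
    rw [Measure.restrict_map hg measurableSet_Ico] at hφmeas
    exact (hφmeas.comp_measurable hg).mono_measure (Measure.restrict_mono_set μ hgs)
  refine hf.bdd_mul (c := φ 0) hmeas.aestronglyMeasurable ?_
  filter_upwards [ae_restrict_mem hs] with x hx
  rw [Real.norm_of_nonneg (hφ.nonneg _ (hgs hx))]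
  exact hφ.antitoneOn (left_mem_Ico.2 one_pos) (hgs hx) (hgs hx).1

end IsDecreasingFactor

theorem ofReal_mem_unitDisk {s : ℝ} (hs : s ∈ Ico (0 : ℝ) 1) : (s : ℂ) ∈ unitDisk := by
  simpa only [unitDisk, mem_ofPred_eq, norm_real, Real.norm_of_nonneg hs.1] using hs.2

theorem omHat_nonneg (hω : ∀ z ∈ unitDisk, 0 ≤ ω z) (hr : 0 ≤ r) : 0 ≤ omHat ω r :=
  setIntegral_nonneg measurableSet_Ioo fun _ hs ↦
    hω _ (ofReal_mem_unitDisk ⟨hr.trans hs.1.le, hs.2⟩)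

theorem OmHatPos.integrableOn (hpos : OmHatPos ω) :
    IntegrableOn (fun s : ℝ ↦ ω s) (Ioo 0 1) :=
  .of_integral_ne_zero (hpos 0 le_rfl one_pos).ne'

theorem radialMul_nonneg (hφ : ∀ r ∈ Ico (0 : ℝ) 1, 0 ≤ φ r) (hω : ∀ z ∈ unitDisk, 0 ≤ ω z) :
    ∀ z ∈ unitDisk, 0 ≤ radialMul φ ω z :=
  fun z hz ↦ mul_nonneg (hφ _ ⟨norm_nonneg z, hz⟩) (hω z hz)

protected theorem IsRadial.radialMul (hω : IsRadial ω) (φ : ℝ → ℝ) : IsRadial (radialMul φ ω) :=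
  fun z w h ↦ by simp only [radialMul, h, hω z w h]

protected theorem IsWeight.radialMul (hω : IsWeight ω) (hφ : IsDecreasingFactor φ) :
    IsWeight (radialMul φ ω) :=
  ⟨radialMul_nonneg hφ.nonneg hω.1,
    hφ.integrableOn_comp_mul measurable_norm (measurableSet_lt measurable_norm measurable_const)
      (fun z hz ↦ ⟨norm_nonneg z, hz⟩) hω.2⟩

theorem omHat_radialMul (φ : ℝ → ℝ) (ω : ℂ → ℝ) (hr : 0 ≤ r) :
    omHat (radialMul φ ω) r = ∫ s in Ioo r 1, φ s * ω s :=
  setIntegral_congr_fun measurableSet_Ioo fun s hs ↦ by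
    simp only [radialMul, norm_real, Real.norm_of_nonneg (hr.trans hs.1.le)]

theorem omHat_radialMul_le (hφ : IsDecreasingFactor φ)
    (hω : ∀ z ∈ unitDisk, 0 ≤ ω z) (hint : IntegrableOn (fun s : ℝ ↦ ω s) (Ioo 0 1))
    (hr : r ∈ Ico (0 : ℝ) 1) :
    omHat (radialMul φ ω) r ≤ φ r * omHat ω r := by
  have hsub : Ioo r 1 ⊆ Ioo 0 1 := Ioo_subset_Ioo_left hr.1
  rw [omHat_radialMul φ ω hr.1]
  exact setIntegral_mul_le_mul_setIntegral measurableSet_Ioo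
    (fun s hs ↦ hφ.antitoneOn hr (Ioo_subset_Ico_self (hsub hs)) hs.1.le)
    (fun s hs ↦ hω _ (ofReal_mem_unitDisk (Ioo_subset_Ico_self (hsub hs))))
    (hint.mono_set hsub)
    ((hφ.integrableOn_comp_mul measurable_id measurableSet_Ioo Ioo_subset_Ico_self hint).mono_set
      hsub)

theorem mul_omHat_sub_add_omHat_radialMul_le (hφ : IsDecreasingFactor φ)
    (hω : ∀ z ∈ unitDisk, 0 ≤ ω z) (hint : IntegrableOn (fun s : ℝ ↦ ω s) (Ioo 0 1))
    (hr : 0 ≤ r) (hρ : ρ ∈ Ico r 1) :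
    φ ρ * (omHat ω r - omHat ω ρ) + omHat (radialMul φ ω) ρ ≤ omHat (radialMul φ ω) r := by
  have hIoo : Ioo r 1 ⊆ Ioo 0 1 := Ioo_subset_Ioo_left hr
  have hIoc : Ioc r ρ ⊆ Ioo 0 1 := (Ioc_subset_Ioo_right hρ.2).trans hIoo
  have hφint : IntegrableOn (fun s : ℝ ↦ φ s * ω s) (Ioo 0 1) :=
    hφ.integrableOn_comp_mul measurable_id measurableSet_Ioo Ioo_subset_Ico_self hint
  have hsplit : omHat ω r - omHat ω ρ = ∫ s in Ioc r ρ, ω s :=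
    sub_eq_of_eq_add (setIntegral_Ioc_add_setIntegral_Ioo hρ.1 hρ.2 (hint.mono_set hIoo)).symm
  rw [hsplit, omHat_radialMul φ ω hr, omHat_radialMul φ ω (hr.trans hρ.1),
    ← setIntegral_Ioc_add_setIntegral_Ioo hρ.1 hρ.2 (hφint.mono_set hIoo)]
  gcongr
  exact mul_setIntegral_le_setIntegral_mul measurableSet_Ioc
    (fun s hs ↦ hφ.antitoneOn (Ioo_subset_Ico_self (hIoc hs)) ⟨hr.trans hρ.1, hρ.2⟩ hs.2)
    (fun s hs ↦ hω _ (ofReal_mem_unitDisk (Ioo_subset_Ico_self (hIoc hs))))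
    (hint.mono_set hIoc) (hφint.mono_set hIoc)

protected theorem Dcheck.radialMul (hD : Dcheck ω) (hφ : IsDecreasingFactor φ)
    (hω : ∀ z ∈ unitDisk, 0 ≤ ω z) (hint : IntegrableOn (fun s : ℝ ↦ ω s) (Ioo 0 1)) :
    Dcheck (radialMul φ ω) := by
  obtain ⟨C, hC, K, hK, hdec⟩ := hD
  refine ⟨C, hC, K, hK, fun r hr₀ hr₁ ↦ ?_⟩
  have hρ := one_sub_div_mem_Ico hK.le hr₁
  specialize hdec r hr₀ hr₁
  set ρ := 1 - (1 - r) / K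
  have hρ' : ρ ∈ Ico (0 : ℝ) 1 := ⟨hr₀.trans hρ.1, hρ.2⟩
  have hφρ : 0 ≤ φ ρ := hφ.nonneg ρ hρ'
  have hC₀ : 0 ≤ C - 1 := sub_nonneg.2 hC.le
  calc C * omHat (radialMul φ ω) ρ
      = (C - 1) * omHat (radialMul φ ω) ρ + omHat (radialMul φ ω) ρ := by ring
    _ ≤ (C - 1) * (φ ρ * omHat ω ρ) + omHat (radialMul φ ω) ρ := by
      gcongr ?_ + _
      exact mul_le_mul_of_nonneg_left (omHat_radialMul_le hφ hω hint hρ') hC₀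
    _ = φ ρ * (C * omHat ω ρ - omHat ω ρ) + omHat (radialMul φ ω) ρ := by ring
    _ ≤ φ ρ * (omHat ω r - omHat ω ρ) + omHat (radialMul φ ω) ρ := by gcongr
    _ ≤ omHat (radialMul φ ω) r :=
      mul_omHat_sub_add_omHat_radialMul_le hφ hω hint hr₀ hρ

theorem exists_mul_omHat_le_mul_omHat_radialMul (hφ : IsDecreasingFactor φ)
    (hω : ∀ z ∈ unitDisk, 0 ≤ ω z) (hint : IntegrableOn (fun s : ℝ ↦ ω s) (Ioo 0 1))
    (hd : IsDoublingFactor φ) (hD : Dcheck ω) :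
    ∃ B ≥ (1 : ℝ), ∀ r ∈ Ico (0 : ℝ) 1, φ r * omHat ω r ≤ B * omHat (radialMul φ ω) r := by
  obtain ⟨C, hC, K, hK, hdec⟩ := hD
  obtain ⟨M, hM, hφM⟩ := hφ.exists_le_mul_one_sub_div hd hK.le
  have hC₁ : 0 < C - 1 := sub_pos.2 hC
  have hq : 1 ≤ C / (C - 1) := (one_le_div hC₁).2 (by linarith)
  refine ⟨M * (C / (C - 1)), one_le_mul_of_one_le_of_one_le hM hq, fun r hr ↦ ?_⟩
  have hρ := one_sub_div_mem_Ico hK.le hr.2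
  specialize hdec r hr.1 hr.2
  specialize hφM r hr
  set ρ := 1 - (1 - r) / K
  have hρ₀ : 0 ≤ ρ := hr.1.trans hρ.1
  have hφρ : 0 ≤ φ ρ := hφ.nonneg ρ ⟨hρ₀, hρ.2⟩
  have hgap : omHat ω r ≤ C / (C - 1) * (omHat ω r - omHat ω ρ) := by
    rw [div_mul_eq_mul_div, le_div_iff₀ hC₁]
    linarith
  have hpiece : φ ρ * (omHat ω r - omHat ω ρ) ≤ omHat (radialMul φ ω) r := by
    linarith [mul_omHat_sub_add_omHat_radialMul_le hφ hω hint hr.1 hρ,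
      omHat_nonneg (radialMul_nonneg hφ.nonneg hω) hρ₀]
  calc φ r * omHat ω r
      ≤ (M * φ ρ) * (C / (C - 1) * (omHat ω r - omHat ω ρ)) :=
        mul_le_mul hφM hgap (omHat_nonneg hω hr.1) (by positivity)
    _ = M * (C / (C - 1)) * (φ ρ * (omHat ω r - omHat ω ρ)) := by ring
    _ ≤ M * (C / (C - 1)) * omHat (radialMul φ ω) r := by gcongr

protected theorem DoublingD.radialMul (hD : DoublingD ω) (hφ : IsDecreasingFactor φ)
    (hω : ∀ z ∈ unitDisk, 0 ≤ ω z) (hint : IntegrableOn (fun s : ℝ ↦ ω s) (Ioo 0 1))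
    (hd : IsDoublingFactor φ) : DoublingD (radialMul φ ω) := by
  refine ⟨?_, hD.2.radialMul hφ hω hint⟩
  obtain ⟨B, hB, hlower⟩ := exists_mul_omHat_le_mul_omHat_radialMul hφ hω hint hd hD.2
  obtain ⟨C, hC, hdbl⟩ := hD.1
  obtain ⟨M, hM, hφM⟩ := hd
  refine ⟨M * C * B, one_lt_mul_of_lt_of_le (one_lt_mul_of_le_of_lt hM hC) hB,
    fun r hr₀ hr₁ ↦ ?_⟩
  have hmid : (1 + r) / 2 ∈ Ico (0 : ℝ) 1 := by constructor <;> linarith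
  have hφmid : 0 ≤ φ ((1 + r) / 2) := hφ.nonneg _ hmid
  calc omHat (radialMul φ ω) r
      ≤ φ r * omHat ω r := omHat_radialMul_le hφ hω hint ⟨hr₀, hr₁⟩
    _ ≤ (M * φ ((1 + r) / 2)) * (C * omHat ω ((1 + r) / 2)) :=
      mul_le_mul (hφM r ⟨hr₀, hr₁⟩) (hdbl r hr₀ hr₁) (omHat_nonneg hω hr₀) (by positivity)
    _ = M * C * (φ ((1 + r) / 2) * omHat ω ((1 + r) / 2)) := by ring
    _ ≤ M * C * (B * omHat (radialMul φ ω) ((1 + r) / 2)) :=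
      mul_le_mul_of_nonneg_left (hlower _ hmid) (by positivity)
    _ = M * C * B * omHat (radialMul φ ω) ((1 + r) / 2) := by ring

theorem shifted_weight_doubling_general (hw : IsWeight ω) (hrad : IsRadial ω) (hpos : OmHatPos ω)
    (hD : DoublingD ω) (hφ : IsDecreasingFactor φ) (hd : IsDoublingFactor φ) :
    IsRadial (radialMul φ ω) ∧ IsWeight (radialMul φ ω) ∧ DoublingD (radialMul φ ω) ∧
    ∃ C : ℝ, 1 ≤ C ∧ ∀ z ∈ unitDisk,
      C⁻¹ * (omHat ω ‖z‖ * φ ‖z‖) ≤ omHat (radialMul φ ω) ‖z‖ ∧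
      omHat (radialMul φ ω) ‖z‖ ≤ C * (omHat ω ‖z‖ * φ ‖z‖) := by
  have hint := hpos.integrableOn
  obtain ⟨B, hB, hlower⟩ := exists_mul_omHat_le_mul_omHat_radialMul hφ hw.1 hint hd hD.2
  refine ⟨hrad.radialMul φ, hw.radialMul hφ, hD.radialMul hφ hw.1 hint hd, B, hB, fun z hz ↦ ?_⟩
  have hz' : ‖z‖ ∈ Ico (0 : ℝ) 1 := ⟨norm_nonneg z, hz⟩
  have hprod : 0 ≤ φ ‖z‖ * omHat ω ‖z‖ :=
    mul_nonneg (hφ.nonneg _ hz') (omHat_nonneg hw.1 hz'.1)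
  rw [mul_comm (omHat ω ‖z‖), inv_mul_le_iff₀ (one_pos.trans_le hB)]
  exact ⟨hlower _ hz', (omHat_radialMul_le hφ hw.1 hint hz').trans
    (le_mul_of_one_le_left hprod hB)⟩

end

theorem shifted_weight_doubling (ω : ℂ → ℝ)
    (hw : IsWeight ω) (hrad : IsRadial ω) (hpos : OmHatPos ω) (hD : DoublingD ω)
    (α : ℝ) (hα : 0 < α) :
    IsRadial (fun w => (1 - ‖w‖) ^ α * ω w) ∧
    IsWeight (fun w => (1 - ‖w‖) ^ α * ω w) ∧
    DoublingD (fun w => (1 - ‖w‖) ^ α * ω w) ∧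
    ∃ C : ℝ, 1 ≤ C ∧ ∀ z ∈ unitDisk,
      C⁻¹ * (omHat ω ‖z‖ * (1 - ‖z‖) ^ α) ≤ omHat (fun w => (1 - ‖w‖) ^ α * ω w) ‖z‖ ∧
      omHat (fun w => (1 - ‖w‖) ^ α * ω w) ‖z‖ ≤ C * (omHat ω ‖z‖ * (1 - ‖z‖) ^ α) :=
  shifted_weight_doubling_general hw hrad hpos hD (isDecreasingFactor_one_sub_rpow hα.le)
    (isDoublingFactor_one_sub_rpow hα.le)
end
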